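/- Let (α,c) be admissible. Then there exist a constant η with 0 < η < min{α, η₀}, a constant C > 0, and two linearly independent solutions φ_{α,+}, φ_{α,−} of the homogeneous Rayleigh equation Ray_α(φ) = 0 on [0,∞) of the form φ_{α,±}(z) = e^{±αz}(1 + ψ_{α,±}(z)), where ψ_{α,±} ∈ X^η and ‖ψ_{α,±}‖_η ≤ C. -/

import Mathlib

open Real Complex Filter Set MeasureTheory

noncomputable section

/-- A boundary layer profile: smooth, `U 0 = 0`, with all derivatives of `U - U₊`
decaying exponentially at rate `eta0`. -/
structure BLProfile where
  U : ℝ → ℝ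
  smooth : ContDiff ℝ (⊤ : ℕ∞) U
  zeroAtZero : U 0 = 0
  Uplus : ℝ
  eta0 : ℝ
  eta0_pos : 0 < eta0
  decay : ∀ k : ℕ, ∃ C > 0, ∀ z ≥ (0 : ℝ),
    |iteratedDeriv k (fun y => U y - Uplus) z| ≤ C * Real.exp (-eta0 * z)

/-- `Δ_α φ = φ'' - α² φ`. -/
def lapA (α : ℝ) (φ : ℝ → ℂ) : ℝ → ℂ :=
  fun z => deriv (deriv φ) z - (α : ℂ) ^ 2 * φ z

namespace BLProfile

variable (P : BLProfile)

/-- `U''`. -/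
def ddU : ℝ → ℝ := fun z => deriv (deriv P.U) z

/-- The Rayleigh operator `Ray_α(φ) = (U - c) Δ_α φ - U'' φ`. -/
def Ray (α : ℝ) (c : ℂ) (φ : ℝ → ℂ) : ℝ → ℂ :=
  fun z => ((P.U z : ℂ) - c) * lapA α φ z - (P.ddU z : ℂ) * φ z

/-- The Orr–Sommerfeld operator `OS(φ) = (U - c) Δ_α φ - U'' φ - ε Δ_α² φ`. -/
def OS (α : ℝ) (c ε : ℂ) (φ : ℝ → ℂ) : ℝ → ℂ :=
  fun z => P.Ray α c φ z - ε * lapA α (lapA α φ) z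

/-- The distance `d_c` from `c` to the range of `U` over `[0, ∞)`. -/
def dc (c : ℂ) : ℝ := Metric.infDist c ((fun z => (P.U z : ℂ)) '' Set.Ici 0)

/-- Admissibility of the pair `(α, c)`: `d_c ≥ ε₀ / (1 + α)`. -/
def Admissible (ε₀ α : ℝ) (c : ℂ) : Prop := ε₀ / (1 + α) ≤ P.dc c

/-- The fast rate `μ_f(z) = (α² + (U(z) - c)/ε)^{1/2}` (principal square root). -/
def muF (α : ℝ) (c ε : ℂ) : ℝ → ℂ :=
  fun z => ((α : ℂ) ^ 2 + ((P.U z : ℂ) - c) / ε) ^ (1 / 2 : ℂ)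

/-- `m_f = inf_{z ≥ 0} Re μ_f(z)`. -/
def mF (α : ℝ) (c ε : ℂ) : ℝ := ⨅ z : Set.Ici (0 : ℝ), (P.muF α c ε z.1).re

/-- `M_f = sup_{z ≥ 0} Re μ_f(z)`. -/
def MF (α : ℝ) (c ε : ℂ) : ℝ := ⨆ z : Set.Ici (0 : ℝ), (P.muF α c ε z.1).re

end BLProfile

/-- `ε = ν / (iα)`. -/
def epsOf (α ν : ℝ) : ℂ := (ν : ℂ) / (Complex.I * (α : ℂ))

/-- The weighted sup-norm `‖ω‖_η = sup_{z ≥ 0} |ω(z)| e^{ηz}`. -/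
def wnorm (η : ℝ) (ω : ℝ → ℂ) : ℝ :=
  sSup ((fun z => ‖ω z‖ * Real.exp (η * z)) '' Set.Ici 0)

/-- Membership in the weighted space `X^η` (finiteness of the weighted norm). -/
def memX (η : ℝ) (ω : ℝ → ℂ) : Prop :=
  ∃ C, ∀ z ≥ (0 : ℝ), ‖ω z‖ * Real.exp (η * z) ≤ C


theorem fp_aux (k : ℝ → ℝ → ℝ) (V : ℝ → ℂ) (ρ : ℝ → ℝ) (g : ℝ → ℂ) (κ K η m M G : ℝ)
    (hk : Continuous (Function.uncurry k)) (hk0 : ∀ z s, 0 ≤ k z s) (hk1 : ∀ z s, k z s ≤ κ)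
    (hV : Continuous V) (hVb : ∀ s, 0 ≤ s → ‖V s‖ ≤ K * Real.exp (-η * s)) (hη : 0 < η)
    (hm : 0 < m) (hρ : Continuous ρ) (hρm : ∀ z, m ≤ ρ z) (hρM : ∀ z, ρ z ≤ M)
    (hg : Continuous g) (hgb : ∀ z, ‖g z‖ ≤ G)
    (hI : ∀ z, ∫ s in Ioi (0:ℝ), k z s * (K * Real.exp (-η * s)) * ρ s ≤ ρ z / 2) :
    ∃ u : ℝ → ℂ, Continuous u ∧ (∃ B, ∀ z, ‖u z‖ ≤ B) ∧
      ∀ z, u z = g z + ∫ s in Ioi (0:ℝ), (k z s : ℂ) * (V s * u s) := by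
  have hκ : 0 ≤ κ := (hk0 0 0).trans (hk1 0 0)
  have hK : 0 ≤ K := by
    have := (norm_nonneg _).trans (hVb 0 le_rfl)
    simpa using this
  have hρ0 : ∀ z, 0 < ρ z := fun z => hm.trans_le (hρm z)
  have hM : 0 < M := (hρ0 0).trans_le (hρM 0)
  have hexp : IntegrableOn (fun s : ℝ => Real.exp (-η * s)) (Ioi 0) :=
    integrableOn_exp_mul_Ioi (by linarith) 0
  have hkz : ∀ z, Continuous (k z) := fun z => by
    have : k z = Function.uncurry k ∘ fun s => (z, s) := rfl
    rw [this]; fun_prop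
  have hks : ∀ s, Continuous (fun z => k z s) := fun s => by
    have : (fun z => k z s) = Function.uncurry k ∘ fun z => (z, s) := rfl
    rw [this]; fun_prop
  -- pointwise bound
  have hpt : ∀ (h : BoundedContinuousFunction ℝ ℂ) (z s : ℝ), 0 ≤ s →
      ‖(k z s : ℂ) * (V s * ((ρ s : ℂ) * h s))‖
        ≤ k z s * (K * Real.exp (-η * s)) * ρ s * ‖h‖ := by
    intro h z s hs
    rw [norm_mul, norm_mul, norm_mul, Complex.norm_real, Complex.norm_real,
      Real.norm_of_nonneg (hk0 z s), Real.norm_of_nonneg (hρ0 s).le]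
    have h1 := hVb s hs
    have h2 := h.norm_coe_le_norm s
    have h3 := hk0 z s
    have h4 := (hρ0 s).le
    calc k z s * (‖V s‖ * (ρ s * ‖h s‖))
        ≤ k z s * ((K * Real.exp (-η * s)) * (ρ s * ‖h‖)) := by gcongr
      _ = _ := by ring
  have hpt2 : ∀ (z s : ℝ), k z s * (K * Real.exp (-η * s)) * ρ s
        ≤ (κ * K * M) * Real.exp (-η * s) := by
    intro z s
    have h3 := hk0 z s
    have h4 := (hρ0 s).le
    calc k z s * (K * Real.exp (-η * s)) * ρ s ≤ κ * (K * Real.exp (-η * s)) * M := by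
          gcongr
          · exact hk1 z s
          · exact hρM s
      _ = _ := by ring
  have hcz : ∀ (h : BoundedContinuousFunction ℝ ℂ) (z : ℝ),
      Continuous fun s => (k z s : ℂ) * (V s * ((ρ s : ℂ) * h s)) := by
    intro h z
    have := hkz z
    have := h.continuous
    fun_prop
  have hint1 : ∀ z, IntegrableOn (fun s => k z s * (K * Real.exp (-η * s)) * ρ s) (Ioi 0) := by
    intro z
    refine Integrable.mono' (hexp.const_mul (κ * K * M)) ?_ ?_
    · have := hkz z
      exact Continuous.aestronglyMeasurable (by fun_prop)
    · refine Eventually.of_forall fun s => ?_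
      rw [Real.norm_of_nonneg]
      · exact hpt2 z s
      · have := hk0 z s
        have := (hρ0 s).le
        positivity
  have hint : ∀ (h : BoundedContinuousFunction ℝ ℂ) (z : ℝ),
      IntegrableOn (fun s => (k z s : ℂ) * (V s * ((ρ s : ℂ) * h s))) (Ioi 0) := by
    intro h z
    refine Integrable.mono' ((hint1 z).mul_const ‖h‖) (hcz h z).aestronglyMeasurable ?_
    filter_upwards [ae_restrict_mem measurableSet_Ioi] with s hs
    exact hpt h z s (le_of_lt hs)
  have hFb : ∀ (h : BoundedContinuousFunction ℝ ℂ) (z : ℝ),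
      ‖∫ s in Ioi (0:ℝ), (k z s : ℂ) * (V s * ((ρ s : ℂ) * h s))‖ ≤ ρ z / 2 * ‖h‖ := by
    intro h z
    calc _ ≤ ∫ s in Ioi (0:ℝ), k z s * (K * Real.exp (-η * s)) * ρ s * ‖h‖ := by
          refine norm_integral_le_of_norm_le ((hint1 z).mul_const ‖h‖) ?_
          filter_upwards [ae_restrict_mem measurableSet_Ioi] with s hs
          exact hpt h z s (le_of_lt hs)
      _ = (∫ s in Ioi (0:ℝ), k z s * (K * Real.exp (-η * s)) * ρ s) * ‖h‖ := by
          rw [integral_mul_const]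
      _ ≤ _ := by gcongr; exact hI z
  have hFc : ∀ (h : BoundedContinuousFunction ℝ ℂ),
      Continuous fun z => ∫ s in Ioi (0:ℝ), (k z s : ℂ) * (V s * ((ρ s : ℂ) * h s)) := by
    intro h
    refine continuous_of_dominated (bound := fun s => (κ * K * M) * Real.exp (-η * s) * ‖h‖)
      (fun z => (hcz h z).aestronglyMeasurable) ?_ ((hexp.const_mul _).mul_const _) ?_
    · intro z
      filter_upwards [ae_restrict_mem measurableSet_Ioi] with s hs
      refine (hpt h z s (le_of_lt hs)).trans ?_
      exact mul_le_mul_of_nonneg_right (hpt2 z s) (norm_nonneg _)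
    · refine Eventually.of_forall fun s => ?_
      have := hks s
      fun_prop
  let T : BoundedContinuousFunction ℝ ℂ → BoundedContinuousFunction ℝ ℂ := fun h =>
    BoundedContinuousFunction.ofNormedAddCommGroup
      (fun z => ((ρ z : ℂ))⁻¹ * (g z + ∫ s in Ioi (0:ℝ), (k z s : ℂ) * (V s * ((ρ s : ℂ) * h s))))
      (by
        refine Continuous.mul (Continuous.inv₀ (by fun_prop) ?_) (hg.add (hFc h))
        intro z
        exact_mod_cast (hρ0 z).ne')
      (m⁻¹ * (G + M / 2 * ‖h‖))
      (by
        intro z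
        rw [norm_mul, norm_inv, Complex.norm_real, Real.norm_of_nonneg (hρ0 z).le]
        have h1 : (ρ z)⁻¹ ≤ m⁻¹ := inv_anti₀ hm (hρm z)
        have h2 := hFb h z
        have h3 : ρ z / 2 * ‖h‖ ≤ M / 2 * ‖h‖ := by gcongr; exact hρM z
        have h4 := norm_add_le (g z) (∫ s in Ioi (0:ℝ), (k z s : ℂ) * (V s * ((ρ s : ℂ) * h s)))
        have h5 := hgb z
        refine mul_le_mul h1 (by linarith) (norm_nonneg _) (by positivity))
  have hT : ContractingWith (1/2) T := by
    refine ⟨by norm_num, LipschitzWith.of_dist_le_mul fun h h' => ?_⟩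
    rw [BoundedContinuousFunction.dist_le (by positivity)]
    intro z
    have e : T h z - T h' z = ((ρ z : ℂ))⁻¹ *
        ∫ s in Ioi (0:ℝ), (k z s : ℂ) * (V s * ((ρ s : ℂ) * (h - h') s)) := by
      have : ∫ s in Ioi (0:ℝ), (k z s : ℂ) * (V s * ((ρ s : ℂ) * (h - h') s))
        = (∫ s in Ioi (0:ℝ), (k z s : ℂ) * (V s * ((ρ s : ℂ) * h s)))
          - ∫ s in Ioi (0:ℝ), (k z s : ℂ) * (V s * ((ρ s : ℂ) * h' s)) := by
        rw [← integral_sub (hint h z) (hint h' z)]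
        congr 1; ext s
        simp only [BoundedContinuousFunction.coe_sub, Pi.sub_apply]
        ring
      rw [this]
      simp only [T, BoundedContinuousFunction.coe_ofNormedAddCommGroup]
      ring
    rw [dist_eq_norm, e, norm_mul, norm_inv, Complex.norm_real, Real.norm_of_nonneg (hρ0 z).le,
      dist_eq_norm]
    have h2 := hFb (h - h') z
    have h3 := hρ0 z
    calc _ ≤ (ρ z)⁻¹ * (ρ z / 2 * ‖h - h'‖) := by gcongr
      _ = _ := by
        push_cast
        field_simp
  set h := hT.fixedPoint T with hh
  have hfix : T h = h := hT.fixedPoint_isFixedPt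
  refine ⟨fun z => (ρ z : ℂ) * h z, ?_, ⟨M * ‖h‖, ?_⟩, ?_⟩
  · have := h.continuous
    fun_prop
  · intro z
    rw [norm_mul, Complex.norm_real, Real.norm_of_nonneg (hρ0 z).le]
    have := h.norm_coe_le_norm z
    have := hρM z
    gcongr
  · intro z
    have e : h z = T h z := by rw [hfix]
    have hne : (ρ z : ℂ) ≠ 0 := by exact_mod_cast (hρ0 z).ne'
    simp only []
    rw [e]
    simp only [T, BoundedContinuousFunction.coe_ofNormedAddCommGroup]
    rw [mul_inv_cancel_left₀ hne]

theorem deriv_aux (β : ℝ) (hβ : β ≠ 0) (c1 c2 : ℂ) (q : ℝ → ℂ) (hq : Continuous q)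
    (u u' : ℝ → ℂ)
    (hu : ∀ z : ℝ, u z = c1 + c2 * Complex.exp (-2 * β * z) + 1 / (2 * β) *
      ((∫ s in (0:ℝ)..z, q s)
        - Complex.exp (-2 * β * z) * ∫ s in (0:ℝ)..z, Complex.exp (2 * β * s) * q s))
    (hu' : ∀ z : ℝ, u' z = Complex.exp (-2 * β * z) *
      (-2 * β * c2 + ∫ s in (0:ℝ)..z, Complex.exp (2 * β * s) * q s)) :
    (∀ z, HasDerivAt u (u' z) z) ∧ ∀ z, HasDerivAt u' (-2 * β * u' z + q z) z := by
  have hβ' : (β : ℂ) ≠ 0 := by exact_mod_cast hβ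
  have he : ∀ z : ℝ, HasDerivAt (fun z : ℝ => Complex.exp (-2 * β * z))
      (Complex.exp (-2 * β * z) * (-2 * β)) z := by
    intro z
    have h1 : HasDerivAt (fun z : ℝ => (-2 * β : ℂ) * z) (-2 * β) z := by
      simpa using (Complex.ofRealCLM.hasDerivAt (x := z)).const_mul (-2 * β : ℂ)
    exact h1.cexp
  have hee : ∀ z : ℝ, Complex.exp (-2 * β * z) * Complex.exp (2 * β * z) = 1 := by
    intro z
    rw [← Complex.exp_add]
    simp
  have h1 : ∀ z : ℝ, HasDerivAt (fun z => ∫ s in (0:ℝ)..z, q s) (q z) z := fun z =>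
    hq.integral_hasStrictDerivAt 0 z |>.hasDerivAt
  have h2 : ∀ z : ℝ, HasDerivAt (fun z : ℝ => ∫ s in (0:ℝ)..z, Complex.exp (2 * β * s) * q s)
      (Complex.exp (2 * β * z) * q z) z := fun z => by
    have : Continuous fun s : ℝ => Complex.exp (2 * β * s) * q s := by fun_prop
    exact this.integral_hasStrictDerivAt 0 z |>.hasDerivAt
  constructor
  · intro z
    rw [show u = _ from funext hu]
    refine ((((he z).const_mul c2).const_add c1).add
      (((h1 z).sub ((he z).mul (h2 z))).const_mul (1 / (2 * β) : ℂ))).congr_deriv ?_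
    rw [hu']
    have := hee z
    generalize Complex.exp (-2 * β * z) = E at *
    generalize Complex.exp (2 * β * z) = E' at *
    field_simp
    linear_combination (-q z) * this
  · intro z
    rw [show u' = _ from funext hu']
    refine ((he z).mul ((h2 z).const_add _)).congr_deriv ?_
    have := hee z
    linear_combination (q z) * this

theorem sol_plus (α K η₀ : ℝ) (hα : 0 < α) (hK : 0 < K) (hη₀ : 0 < η₀) (V : ℝ → ℂ)
    (hV : Continuous V) (hVb : ∀ s, 0 ≤ s → ‖V s‖ ≤ K * Real.exp (-η₀ * s)) (a b : ℂ)
    (η : ℝ) (hη1 : η < α) (hη2 : η < η₀) :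
    ∃ u u' : ℝ → ℂ, (∀ z, HasDerivAt u (u' z) z) ∧
      (∀ z, 0 ≤ z → HasDerivAt u' (-2 * α * u' z + V z * u z) z) ∧
      u 0 = a ∧ u' 0 = b ∧ (∃ C, ∀ z, 0 ≤ z → ‖u' z‖ ≤ C * Real.exp (-η * z)) := by
  have hα' : (α : ℂ) ≠ 0 := by exact_mod_cast hα.ne'
  set l : ℝ := K / (α * η₀) with hl
  have hl0 : 0 < l := by positivity
  have hKl : K = l * α * η₀ := by rw [hl]; field_simp
  obtain ⟨c1, hc1⟩ : ∃ c1 : ℂ, c1 = a + b / (2 * α) := ⟨_, rfl⟩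
  obtain ⟨c2, hc2⟩ : ∃ c2 : ℂ, c2 = -b / (2 * α) := ⟨_, rfl⟩
  obtain ⟨f, hfc, ⟨B, hB⟩, hf⟩ := fp_aux
    (fun z s => (1 - Real.exp (-2 * α * max (max z 0 - s) 0)) / (2 * α)) V
    (fun z => Real.exp (-l * Real.exp (-η₀ * max z 0)))
    (fun z => c1 + c2 * Complex.exp (-2 * α * (max z 0 : ℝ))) (1 / (2 * α)) K η₀
    (Real.exp (-l)) 1 (‖c1‖ + ‖c2‖)
    (by unfold Function.uncurry; fun_prop)
    (by
      intro z s
      have : Real.exp (-2 * α * max (max z 0 - s) 0) ≤ 1 := by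
        apply Real.exp_le_one_iff.2
        have : 0 ≤ max (max z 0 - s) 0 := le_max_right _ _
        have := mul_nonneg hα.le this
        linarith
      apply div_nonneg <;> linarith)
    (by
      intro z s
      have := Real.exp_pos (-2 * α * max (max z 0 - s) 0)
      gcongr
      linarith)
    hV hVb hη₀ (Real.exp_pos _) (by fun_prop)
    (by
      intro z
      apply Real.exp_le_exp.2
      have : Real.exp (-η₀ * max z 0) ≤ 1 := by
        apply Real.exp_le_one_iff.2
        have : 0 ≤ max z 0 := le_max_right _ _
        have := mul_nonneg hη₀.le this
        linarith
      nlinarith)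
    (by
      intro z
      apply Real.exp_le_one_iff.2
      have := mul_pos hl0 (Real.exp_pos (-η₀ * max z 0))
      linarith)
    (by fun_prop)
    (by
      intro z
      refine (norm_add_le _ _).trans ?_
      gcongr
      rw [norm_mul]
      refine mul_le_of_le_one_right (norm_nonneg _) ?_
      rw [Complex.norm_exp]
      apply Real.exp_le_one_iff.2
      have : 0 ≤ max z 0 := le_max_right _ _
      have := mul_nonneg hα.le this
      have e : (-2 * (α:ℂ) * (max z 0 : ℝ)).re = -2 * (α * max z 0) := by
        rw [show (-2 * (α:ℂ) * (max z 0 : ℝ)) = ((-2 * (α * max z 0) : ℝ) : ℂ) by push_cast; ring,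
          Complex.ofReal_re]
      rw [e]
      linarith)
    (by
      intro z
      obtain ⟨x, hx⟩ : ∃ x, x = max z 0 := ⟨_, rfl⟩
      have hx0 : 0 ≤ x := hx ▸ le_max_right _ _
      simp only [← hx]
      have hz : ∀ y, x ≤ y → ∀ s ∈ Ioi y, (1 - Real.exp (-2 * α * max (x - s) 0)) / (2 * α) *
          (K * Real.exp (-η₀ * s)) * Real.exp (-l * Real.exp (-η₀ * max s 0)) = 0 := by
        intro y hy s hs
        have : max (x - s) 0 = 0 := max_eq_right (by linarith [mem_Ioi.1 hs])
        rw [this]; simp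
      have hix : IntegrableOn (fun s => (1 - Real.exp (-2 * α * max (x - s) 0)) / (2 * α) *
          (K * Real.exp (-η₀ * s)) * Real.exp (-l * Real.exp (-η₀ * max s 0))) (Ioi x) :=
        integrableOn_zero.congr_fun (fun s hs => (hz x le_rfl s hs).symm) measurableSet_Ioi
      have hi0 : IntegrableOn (fun s => (1 - Real.exp (-2 * α * max (x - s) 0)) / (2 * α) *
          (K * Real.exp (-η₀ * s)) * Real.exp (-l * Real.exp (-η₀ * max s 0))) (Ioi 0) := by
        rw [← Ioc_union_Ioi_eq_Ioi hx0]
        refine IntegrableOn.union ?_ hix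
        exact (Continuous.integrableOn_Icc (by fun_prop)).mono_set Ioc_subset_Icc_self
      rw [← intervalIntegral.integral_interval_add_Ioi hi0 hix,
        setIntegral_eq_zero_of_forall_eq_zero (hz x le_rfl), add_zero]
      have hd : ∀ s : ℝ, HasDerivAt (fun s => Real.exp (-l * Real.exp (-η₀ * s)) / 2)
          (1 / (2 * α) * (K * Real.exp (-η₀ * s)) * Real.exp (-l * Real.exp (-η₀ * s))) s := by
        intro s
        have h1 : HasDerivAt (fun s : ℝ => -η₀ * s) (-η₀) s := by
          simpa using (hasDerivAt_id s).const_mul (-η₀)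
        refine ((h1.exp.const_mul (-l)).exp.div_const 2).congr_deriv ?_
        rw [hKl]
        field_simp
      calc _ ≤ ∫ s in (0:ℝ)..x, 1 / (2 * α) * (K * Real.exp (-η₀ * s)) *
              Real.exp (-l * Real.exp (-η₀ * s)) := by
            refine intervalIntegral.integral_mono_on hx0 (Continuous.intervalIntegrable
              (by fun_prop) _ _) (Continuous.intervalIntegrable (by fun_prop) _ _) ?_
            intro s hs
            rw [max_eq_left hs.1]
            have := Real.exp_pos (-2 * α * max (x - s) 0)
            gcongr
            linarith
        _ = Real.exp (-l * Real.exp (-η₀ * x)) / 2 - Real.exp (-l * Real.exp (-η₀ * 0)) / 2 :=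
            intervalIntegral.integral_eq_sub_of_hasDerivAt (fun s _ => hd s)
              (Continuous.intervalIntegrable (by fun_prop) _ _)
        _ ≤ _ := by
            have := Real.exp_pos (-l * Real.exp (-η₀ * 0))
            linarith)
  have hqc : Continuous fun s => V s * f s := hV.mul hfc
  obtain ⟨u, hu⟩ : ∃ u : ℝ → ℂ, ∀ z : ℝ, u z = c1 + c2 * Complex.exp (-2 * α * z) + 1 / (2 * α) *
      ((∫ s in (0:ℝ)..z, V s * f s)
        - Complex.exp (-2 * α * z) * ∫ s in (0:ℝ)..z, Complex.exp (2 * α * s) * (V s * f s)) :=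
    ⟨_, fun z => rfl⟩
  obtain ⟨u', hu'⟩ : ∃ u' : ℝ → ℂ, ∀ z : ℝ, u' z = Complex.exp (-2 * α * z) *
      (-2 * α * c2 + ∫ s in (0:ℝ)..z, Complex.exp (2 * α * s) * (V s * f s)) :=
    ⟨_, fun z => rfl⟩
  obtain ⟨hd1, hd2⟩ := deriv_aux α hα.ne' c1 c2 _ hqc u u' hu hu'
  have huf : ∀ z, 0 ≤ z → u z = f z := by
    intro z hz
    rw [hf z, hu z]
    simp only [max_eq_left hz]
    congr 1
    have hzz : ∀ s ∈ Ioi z, (((1 - Real.exp (-2 * α * max (z - s) 0)) / (2 * α) : ℝ) : ℂ) *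
          (V s * f s) = 0 := by
      intro s hs
      have : max (z - s) 0 = 0 := max_eq_right (by linarith [mem_Ioi.1 hs])
      rw [this]; simp
    have hix : IntegrableOn (fun s => (((1 - Real.exp (-2 * α * max (z - s) 0)) / (2 * α) : ℝ) : ℂ) *
          (V s * f s)) (Ioi z) :=
      integrableOn_zero.congr_fun (fun s hs => (hzz s hs).symm) measurableSet_Ioi
    have hi0 : IntegrableOn (fun s => (((1 - Real.exp (-2 * α * max (z - s) 0)) / (2 * α) : ℝ) : ℂ) *
          (V s * f s)) (Ioi 0) := by
      rw [← Ioc_union_Ioi_eq_Ioi hz]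
      refine IntegrableOn.union ?_ hix
      exact (Continuous.integrableOn_Icc (by fun_prop)).mono_set Ioc_subset_Icc_self
    rw [← intervalIntegral.integral_interval_add_Ioi hi0 hix,
        setIntegral_eq_zero_of_forall_eq_zero hzz, add_zero,
        ← intervalIntegral.integral_const_mul, ← intervalIntegral.integral_sub,
        ← intervalIntegral.integral_const_mul]
    · apply intervalIntegral.integral_congr
      intro s hs
      rw [uIcc_of_le hz] at hs
      have e : Complex.exp (-2 * α * z) * Complex.exp (2 * α * s)
          = Complex.exp (-2 * α * (z - s)) := by
        rw [← Complex.exp_add]; congr 1; ring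
      simp only
      rw [max_eq_left (by linarith [hs.2])]
      push_cast
      rw [← e]
      ring
    · exact Continuous.intervalIntegrable (by fun_prop) _ _
    · exact Continuous.intervalIntegrable (by fun_prop) _ _
  refine ⟨u, u', hd1, ?_, ?_, ?_, ?_⟩
  · intro z hz
    have := hd2 z
    rwa [huf z hz]
  · rw [hu, hc1, hc2]; simp; ring
  · rw [hu', hc2]; simp; field_simp
  · have hB0 : 0 ≤ B := (norm_nonneg _).trans (hB 0)
    refine ⟨‖b‖ + K * B / (2 * α - η), ?_⟩
    intro z hz
    have h2 : 0 < 2 * α - η := by linarith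
    have hre : ∀ r t : ℝ, ‖Complex.exp (r * α * t)‖ = Real.exp (r * α * t) := by
      intro r t
      rw [show ((r:ℂ) * α * t) = ((r * α * t : ℝ) : ℂ) by push_cast; ring, ← Complex.ofReal_exp,
        Complex.norm_real, Real.norm_of_nonneg (Real.exp_pos _).le]
    have hre1 := hre (-2) z
    push_cast at hre1
    have hint : ‖∫ s in (0:ℝ)..z, Complex.exp (2 * α * s) * (V s * f s)‖
        ≤ K * B / (2 * α - η) * Real.exp ((2 * α - η) * z) := by
      have hd : ∀ s : ℝ, HasDerivAt (fun s => K * B / (2 * α - η) * Real.exp ((2 * α - η) * s))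
          (K * B * Real.exp ((2 * α - η) * s)) s := by
        intro s
        have h1 : HasDerivAt (fun s : ℝ => (2 * α - η) * s) (2 * α - η) s := by
          simpa using (hasDerivAt_id s).const_mul (2 * α - η)
        refine (h1.exp.const_mul _).congr_deriv ?_
        field_simp
      calc _ ≤ ∫ s in (0:ℝ)..z, K * B * Real.exp ((2 * α - η) * s) := by
            refine intervalIntegral.norm_integral_le_of_norm_le hz ?_
              (Continuous.intervalIntegrable (by fun_prop) _ _)
            refine Eventually.of_forall fun s hs => ?_
            have h3 := hre 2 s
            push_cast at h3
            rw [norm_mul, norm_mul, h3]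
            calc _ ≤ Real.exp (2 * α * s) * (K * Real.exp (-η₀ * s) * B) := by
                  gcongr
                  · exact hVb s hs.1.le
                  · exact hB s
              _ ≤ Real.exp (2 * α * s) * (K * Real.exp (-η * s) * B) := by
                  gcongr
                  exact hs.1.le
              _ = K * B * (Real.exp (2 * α * s) * Real.exp (-η * s)) := by ring
              _ = _ := by rw [← Real.exp_add]; ring_nf
        _ = _ := intervalIntegral.integral_eq_sub_of_hasDerivAt (fun s _ => hd s)
              (Continuous.intervalIntegrable (by fun_prop) _ _)
        _ ≤ _ := by
            have : 0 ≤ K * B / (2 * α - η) * Real.exp ((2 * α - η) * 0) := by positivity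
            linarith
    have hb : (-2 * α * c2 : ℂ) = b := by rw [hc2]; field_simp
    rw [hu', hb, norm_mul, hre1]
    calc _ ≤ Real.exp (-2 * α * z) * (‖b‖ + K * B / (2 * α - η) * Real.exp ((2 * α - η) * z)) := by
          gcongr
          exact (norm_add_le _ _).trans (by gcongr)
      _ = Real.exp (-2 * α * z) * ‖b‖ + K * B / (2 * α - η) *
            (Real.exp (-2 * α * z) * Real.exp ((2 * α - η) * z)) := by ring
      _ = Real.exp (-2 * α * z) * ‖b‖ + K * B / (2 * α - η) * Real.exp (-η * z) := by
          rw [← Real.exp_add]; ring_nf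
      _ ≤ Real.exp (-η * z) * ‖b‖ + K * B / (2 * α - η) * Real.exp (-η * z) := by
          gcongr
          nlinarith
      _ = _ := by ring

theorem sol_minus (α K η₀ : ℝ) (hα : 0 < α) (hK : 0 < K) (hη₀ : 0 < η₀) (V : ℝ → ℂ)
    (hV : Continuous V) (hVb : ∀ s, 0 ≤ s → ‖V s‖ ≤ K * Real.exp (-η₀ * s)) :
    ∃ w w' : ℝ → ℂ, (∀ z, HasDerivAt w (w' z) z) ∧
      (∀ z, 0 ≤ z → HasDerivAt w' (2 * α * w' z + V z * w z) z) ∧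
      (∃ C, ∀ z, 0 ≤ z → ‖w z - 1‖ ≤ C * Real.exp (-η₀ * z)) ∧
      (∃ C, ∀ z, 0 ≤ z → ‖w' z‖ ≤ C * Real.exp (-η₀ * z)) := by
  have hα' : (α : ℂ) ≠ 0 := by exact_mod_cast hα.ne'
  set l : ℝ := K / (α * η₀) with hl
  have hl0 : 0 < l := by positivity
  have hKl : K = l * α * η₀ := by rw [hl]; field_simp
  have hexp : ∀ x : ℝ, IntegrableOn (fun s : ℝ => Real.exp (-η₀ * s)) (Ioi x) := fun x =>
    integrableOn_exp_mul_Ioi (by linarith) x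
  have hk0 : ∀ x s : ℝ, 0 ≤ (1 - Real.exp (-2 * α * max (s - x) 0)) / (2 * α) := by
    intro x s
    have : Real.exp (-2 * α * max (s - x) 0) ≤ 1 := by
      apply Real.exp_le_one_iff.2
      have : 0 ≤ max (s - x) 0 := le_max_right _ _
      have := mul_nonneg hα.le this
      linarith
    apply div_nonneg <;> linarith
  have hk1 : ∀ x s : ℝ, (1 - Real.exp (-2 * α * max (s - x) 0)) / (2 * α) ≤ 1 / (2 * α) := by
    intro x s
    have := Real.exp_pos (-2 * α * max (s - x) 0)
    gcongr
    linarith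
  have hρl : ∀ s : ℝ, 0 ≤ s → Real.exp (l * Real.exp (-η₀ * s)) ≤ Real.exp l := by
    intro z hz
    apply Real.exp_le_exp.2
    have : Real.exp (-η₀ * z) ≤ 1 := by
      apply Real.exp_le_one_iff.2
      have := mul_nonneg hη₀.le hz
      linarith
    nlinarith
  obtain ⟨f, hfc, ⟨B, hB⟩, hf⟩ := fp_aux
    (fun z s => (1 - Real.exp (-2 * α * max (s - max z 0) 0)) / (2 * α)) V
    (fun z => Real.exp (l * Real.exp (-η₀ * max z 0)))
    (fun z => 1) (1 / (2 * α)) K η₀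
    1 (Real.exp l) 1
    (by unfold Function.uncurry; fun_prop)
    (fun z s => hk0 _ _) (fun z s => hk1 _ _)
    hV hVb hη₀ one_pos (by fun_prop)
    (by
      intro z
      apply Real.one_le_exp
      positivity)
    (by
      intro z
      exact hρl _ (le_max_right _ _))
    (by fun_prop)
    (by
      intro z
      simp)
    (by
      intro z
      obtain ⟨x, hx⟩ : ∃ x, x = max z 0 := ⟨_, rfl⟩
      have hx0 : 0 ≤ x := hx ▸ le_max_right _ _
      simp only [← hx]
      have hib : IntegrableOn (fun s => 1 / (2 * α) * (K * Real.exp (-η₀ * s)) *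
          Real.exp (l * Real.exp (-η₀ * s))) (Ioi 0) := by
        refine Integrable.mono' ((hexp 0).const_mul (1 / (2 * α) * K * Real.exp l))
          (Continuous.aestronglyMeasurable (by fun_prop)) ?_
        filter_upwards [ae_restrict_mem measurableSet_Ioi] with s hs
        rw [Real.norm_of_nonneg (by positivity)]
        have := hρl s (le_of_lt hs)
        calc _ ≤ 1 / (2 * α) * (K * Real.exp (-η₀ * s)) * Real.exp l := by gcongr
          _ = _ := by ring
      have hle : ∀ s : ℝ, 0 ≤ s → (1 - Real.exp (-2 * α * max (s - x) 0)) / (2 * α) *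
          (K * Real.exp (-η₀ * s)) * Real.exp (l * Real.exp (-η₀ * max s 0)) ≤
          1 / (2 * α) * (K * Real.exp (-η₀ * s)) * Real.exp (l * Real.exp (-η₀ * s)) := by
        intro s hs
        rw [max_eq_left hs]
        have := hk1 x s
        gcongr
      have hi0 : IntegrableOn (fun s => (1 - Real.exp (-2 * α * max (s - x) 0)) / (2 * α) *
          (K * Real.exp (-η₀ * s)) * Real.exp (l * Real.exp (-η₀ * max s 0))) (Ioi 0) := by
        refine Integrable.mono' hib
          (Continuous.aestronglyMeasurable (by fun_prop)) ?_
        filter_upwards [ae_restrict_mem measurableSet_Ioi] with s hs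
        rw [Real.norm_of_nonneg]
        · exact hle s (le_of_lt hs)
        · have := hk0 x s
          positivity
      have hsub : Ioi x ⊆ Ioi 0 := Ioi_subset_Ioi hx0
      have hix := hi0.mono_set hsub
      have hibx := hib.mono_set hsub
      have hzero : ∫ s in (0:ℝ)..x, (1 - Real.exp (-2 * α * max (s - x) 0)) / (2 * α) *
          (K * Real.exp (-η₀ * s)) * Real.exp (l * Real.exp (-η₀ * max s 0)) = 0 := by
        rw [intervalIntegral.integral_congr (g := fun _ => 0)]
        · simp
        · intro s hs
          rw [uIcc_of_le hx0] at hs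
          simp only
          rw [max_eq_right (by linarith [hs.2] : s - x ≤ 0)]
          simp
      rw [← intervalIntegral.integral_interval_add_Ioi hi0 hix, hzero, zero_add]
      have hd : ∀ s : ℝ, HasDerivAt (fun s => -(Real.exp (l * Real.exp (-η₀ * s)) / 2))
          (1 / (2 * α) * (K * Real.exp (-η₀ * s)) * Real.exp (l * Real.exp (-η₀ * s))) s := by
        intro s
        have h1 : HasDerivAt (fun s : ℝ => -η₀ * s) (-η₀) s := by
          simpa using (hasDerivAt_id s).const_mul (-η₀)
        refine ((h1.exp.const_mul l).exp.div_const 2).neg.congr_deriv ?_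
        rw [hKl]
        field_simp
      have htend : Tendsto (fun s => -(Real.exp (l * Real.exp (-η₀ * s)) / 2)) atTop
          (nhds (-(Real.exp (l * 0) / 2))) := by
        have h1 : Tendsto (fun s : ℝ => -η₀ * s) atTop atBot :=
          tendsto_id.const_mul_atTop_of_neg (by linarith)
        have h2 := (Real.tendsto_exp_atBot.comp h1).const_mul l
        exact (((Real.continuous_exp.tendsto _).comp h2).div_const 2).neg
      calc _ ≤ ∫ s in Ioi x, 1 / (2 * α) * (K * Real.exp (-η₀ * s)) *
              Real.exp (l * Real.exp (-η₀ * s)) := by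
            refine setIntegral_mono_on hix hibx measurableSet_Ioi ?_
            intro s hs
            exact hle s (hsub hs).le
        _ = -(Real.exp (l * 0) / 2) - -(Real.exp (l * Real.exp (-η₀ * x)) / 2) :=
            integral_Ioi_of_hasDerivAt_of_tendsto (hd x).continuousAt.continuousWithinAt
              (fun s _ => hd s) hibx htend
        _ ≤ _ := by
            have := Real.exp_pos (l * 0)
            linarith)
  have hB0 : 0 ≤ B := (norm_nonneg _).trans (hB 0)
  have hqc : Continuous fun s => V s * f s := hV.mul hfc
  have hqb : ∀ s, 0 ≤ s → ‖V s * f s‖ ≤ K * B * Real.exp (-η₀ * s) := by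
    intro s hs
    rw [norm_mul]
    calc _ ≤ K * Real.exp (-η₀ * s) * B := by
          gcongr
          · exact hVb s hs
          · exact hB s
      _ = _ := by ring
  have hre : ∀ r t : ℝ, ‖Complex.exp (r * α * t)‖ = Real.exp (r * α * t) := by
    intro r t
    rw [show ((r:ℂ) * α * t) = ((r * α * t : ℝ) : ℂ) by push_cast; ring, ← Complex.ofReal_exp,
      Complex.norm_real, Real.norm_of_nonneg (Real.exp_pos _).le]
  have hq2b : ∀ s : ℝ, 0 ≤ s → ‖Complex.exp (-2 * α * s) * (V s * f s)‖
      ≤ K * B * Real.exp (-(2 * α + η₀) * s) := by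
    intro s hs
    have h3 := hre (-2) s
    push_cast at h3
    rw [norm_mul, h3]
    calc _ ≤ Real.exp (-2 * α * s) * (K * B * Real.exp (-η₀ * s)) := by
          gcongr
          exact hqb s hs
      _ = K * B * (Real.exp (-2 * α * s) * Real.exp (-η₀ * s)) := by ring
      _ = _ := by rw [← Real.exp_add]; ring_nf
  have hexp2 : ∀ x : ℝ, IntegrableOn (fun s : ℝ => Real.exp (-(2 * α + η₀) * s)) (Ioi x) := fun x =>
    integrableOn_exp_mul_Ioi (by linarith) x
  have hqi : ∀ x, 0 ≤ x → IntegrableOn (fun s => V s * f s) (Ioi x) := by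
    intro x hx
    refine Integrable.mono' ((hexp x).const_mul (K * B)) hqc.aestronglyMeasurable ?_
    filter_upwards [ae_restrict_mem measurableSet_Ioi] with s hs
    exact hqb s (hx.trans (le_of_lt hs))
  have hq2i : ∀ x, 0 ≤ x → IntegrableOn (fun s : ℝ => Complex.exp (-2 * α * s) * (V s * f s)) (Ioi x) := by
    intro x hx
    refine Integrable.mono' ((hexp2 x).const_mul (K * B))
      (Continuous.aestronglyMeasurable (by fun_prop)) ?_
    filter_upwards [ae_restrict_mem measurableSet_Ioi] with s hs
    exact hq2b s (hx.trans (le_of_lt hs))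
  obtain ⟨A1, hA1⟩ : ∃ A1, A1 = ∫ s in Ioi (0:ℝ), V s * f s := ⟨_, rfl⟩
  obtain ⟨A2, hA2⟩ : ∃ A2, A2 = ∫ s in Ioi (0:ℝ), Complex.exp (-2 * α * s) * (V s * f s) := ⟨_, rfl⟩
  have hs1 : ∀ z, 0 ≤ z → ∫ s in (0:ℝ)..z, V s * f s = A1 - ∫ s in Ioi z, V s * f s := by
    intro z hz
    rw [hA1, ← intervalIntegral.integral_interval_add_Ioi (hqi 0 le_rfl) (hqi z hz)]
    ring
  have hs2 : ∀ z : ℝ, 0 ≤ z → ∫ s in (0:ℝ)..z, Complex.exp (-2 * α * s) * (V s * f s)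
      = A2 - ∫ s in Ioi z, Complex.exp (-2 * α * s) * (V s * f s) := by
    intro z hz
    rw [hA2, ← intervalIntegral.integral_interval_add_Ioi (hq2i 0 le_rfl) (hq2i z hz)]
    ring
  obtain ⟨c1, hc1⟩ : ∃ c1 : ℂ, c1 = 1 + A1 / (2 * α) := ⟨_, rfl⟩
  obtain ⟨c2, hc2⟩ : ∃ c2 : ℂ, c2 = -A2 / (2 * α) := ⟨_, rfl⟩
  obtain ⟨u, hu⟩ : ∃ u : ℝ → ℂ, ∀ z : ℝ, u z = c1 + c2 * Complex.exp (-2 * (-α : ℝ) * z) +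
      1 / (2 * (-α : ℝ)) * ((∫ s in (0:ℝ)..z, V s * f s) - Complex.exp (-2 * (-α : ℝ) * z) *
        ∫ s in (0:ℝ)..z, Complex.exp (2 * (-α : ℝ) * s) * (V s * f s)) :=
    ⟨_, fun z => rfl⟩
  obtain ⟨u', hu'⟩ : ∃ u' : ℝ → ℂ, ∀ z : ℝ, u' z = Complex.exp (-2 * (-α : ℝ) * z) *
      (-2 * (-α : ℝ) * c2 + ∫ s in (0:ℝ)..z, Complex.exp (2 * (-α : ℝ) * s) * (V s * f s)) :=
    ⟨_, fun z => rfl⟩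
  obtain ⟨hd1, hd2⟩ := deriv_aux (-α) (by linarith) c1 c2 _ hqc u u' hu hu'
  have e1 : ∀ z : ℝ, (-2 * ((-α : ℝ) : ℂ) * z) = 2 * α * z := by intro z; push_cast; ring
  have e2 : ∀ z : ℝ, (2 * ((-α : ℝ) : ℂ) * z) = -2 * α * z := by intro z; push_cast; ring
  have hu1 : ∀ z : ℝ, 0 ≤ z → u' z = - (Complex.exp (2 * α * z) *
      ∫ s in Ioi z, Complex.exp (-2 * α * s) * (V s * f s)) := by
    intro z hz
    rw [hu' z]
    simp only [e1, e2]
    rw [hs2 z hz, hc2]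
    push_cast
    field_simp
    ring
  have hu0 : ∀ z : ℝ, 0 ≤ z → u z = 1 + 1 / (2 * α) * ((∫ s in Ioi z, V s * f s) -
      Complex.exp (2 * α * z) * ∫ s in Ioi z, Complex.exp (-2 * α * s) * (V s * f s)) := by
    intro z hz
    rw [hu z]
    simp only [e1, e2]
    rw [hs1 z hz, hs2 z hz, hc1, hc2]
    push_cast
    generalize Complex.exp (2 * α * z) = E at *
    field_simp
    ring
  have huf : ∀ z, 0 ≤ z → u z = f z := by
    intro z hz
    rw [hf z, hu0 z hz]
    simp only [max_eq_left hz]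
    congr 1
    have hi0 : IntegrableOn (fun s => (((1 - Real.exp (-2 * α * max (s - z) 0)) / (2 * α) : ℝ) : ℂ) *
          (V s * f s)) (Ioi 0) := by
      refine Integrable.mono' ((hqi 0 le_rfl).norm.const_mul (1 / (2 * α)))
        (Continuous.aestronglyMeasurable (by fun_prop)) ?_
      refine Eventually.of_forall fun s => ?_
      rw [norm_mul, Complex.norm_real, Real.norm_of_nonneg (hk0 z s)]
      have := hk1 z s
      gcongr
    have hix := hi0.mono_set (Ioi_subset_Ioi hz)
    have hzero : ∫ s in (0:ℝ)..z, (((1 - Real.exp (-2 * α * max (s - z) 0)) / (2 * α) : ℝ) : ℂ) *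
          (V s * f s) = 0 := by
      rw [intervalIntegral.integral_congr (g := fun _ => 0)]
      · simp
      · intro s hs
        rw [uIcc_of_le hz] at hs
        simp only
        rw [max_eq_right (by linarith [hs.2] : s - z ≤ 0)]
        simp
    rw [← intervalIntegral.integral_interval_add_Ioi hi0 hix, hzero, zero_add,
        ← integral_const_mul, ← integral_sub (hqi z hz) ((hq2i z hz).const_mul _),
        ← integral_const_mul]
    apply setIntegral_congr_fun measurableSet_Ioi
    intro s hs
    have e : Complex.exp (2 * α * z) * Complex.exp (-2 * α * s)
        = Complex.exp (-2 * α * (s - z)) := by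
      rw [← Complex.exp_add]; congr 1; ring
    simp only
    rw [max_eq_left (by linarith [mem_Ioi.1 hs])]
    push_cast
    rw [← e]
    ring
  have hb2 : ∀ z : ℝ, 0 ≤ z → ‖Complex.exp (2 * α * z) *
      ∫ s in Ioi z, Complex.exp (-2 * α * s) * (V s * f s)‖
      ≤ K * B / (2 * α + η₀) * Real.exp (-η₀ * z) := by
    intro z hz
    have h3 := hre 2 z
    push_cast at h3
    rw [norm_mul, h3]
    have : ‖∫ s in Ioi z, Complex.exp (-2 * α * s) * (V s * f s)‖
        ≤ ∫ s in Ioi z, K * B * Real.exp (-(2 * α + η₀) * s) := by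
      refine norm_integral_le_of_norm_le ((hexp2 z).const_mul _) ?_
      filter_upwards [ae_restrict_mem measurableSet_Ioi] with s hs
      exact hq2b s (hz.trans (le_of_lt hs))
    rw [integral_const_mul, integral_exp_mul_Ioi (by linarith)] at this
    calc _ ≤ Real.exp (2 * α * z) *
          (K * B * (-Real.exp (-(2 * α + η₀) * z) / (-(2 * α + η₀)))) := by gcongr
      _ = K * B / (2 * α + η₀) * (Real.exp (2 * α * z) * Real.exp (-(2 * α + η₀) * z)) := by
          rw [neg_div_neg_eq]; ring
      _ = _ := by rw [← Real.exp_add]; ring_nf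
  have hb1 : ∀ z : ℝ, 0 ≤ z → ‖∫ s in Ioi z, V s * f s‖
      ≤ K * B / η₀ * Real.exp (-η₀ * z) := by
    intro z hz
    have : ‖∫ s in Ioi z, V s * f s‖
        ≤ ∫ s in Ioi z, K * B * Real.exp (-η₀ * s) := by
      refine norm_integral_le_of_norm_le ((hexp z).const_mul _) ?_
      filter_upwards [ae_restrict_mem measurableSet_Ioi] with s hs
      exact hqb s (hz.trans (le_of_lt hs))
    rw [integral_const_mul, integral_exp_mul_Ioi (by linarith)] at this
    refine this.trans (le_of_eq ?_)
    rw [neg_div_neg_eq]; ring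
  refine ⟨u, u', hd1, ?_, ⟨1 / (2 * α) * (K * B / η₀ + K * B / (2 * α + η₀)), ?_⟩,
    ⟨K * B / (2 * α + η₀), ?_⟩⟩
  · intro z hz
    refine (hd2 z).congr_deriv ?_
    rw [huf z hz]
    push_cast
    ring
  · intro z hz
    rw [hu0 z hz, add_sub_cancel_left, norm_mul]
    have : ‖(1 / (2 * α) : ℂ)‖ = 1 / (2 * α) := by
      rw [show (1 / (2 * α) : ℂ) = ((1 / (2 * α) : ℝ) : ℂ) by push_cast; ring,
        Complex.norm_real, Real.norm_of_nonneg (by positivity)]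
    rw [this, mul_assoc (1 / (2 * α)) (K * B / η₀ + K * B / (2 * α + η₀))]
    refine mul_le_mul_of_nonneg_left ?_ (by positivity)
    refine (norm_sub_le _ _).trans ?_
    rw [add_mul]
    exact add_le_add (hb1 z hz) (hb2 z hz)
  · intro z hz
    rw [hu1 z hz, norm_neg]
    exact hb2 z hz

theorem lim_aux (u u' : ℝ → ℂ) (η C : ℝ) (hη : 0 < η) (hd : ∀ z, HasDerivAt u (u' z) z)
    (hb : ∀ z, 0 ≤ z → ‖u' z‖ ≤ C * Real.exp (-η * z)) :
    ∃ l, ∀ z, 0 ≤ z → ‖u z - l‖ ≤ C / η * Real.exp (-η * z) := by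
  have hm : u' = deriv u := funext fun z => (hd z).deriv.symm
  have hexp : ∀ x : ℝ, IntegrableOn (fun s : ℝ => Real.exp (-η * s)) (Ioi x) := fun x =>
    integrableOn_exp_mul_Ioi (by linarith) x
  have hi : ∀ x, 0 ≤ x → IntegrableOn u' (Ioi x) := by
    intro x hx
    refine Integrable.mono' ((hexp x).const_mul C) ?_ ?_
    · rw [hm]; exact (stronglyMeasurable_deriv u).aestronglyMeasurable
    · filter_upwards [ae_restrict_mem measurableSet_Ioi] with s hs
      exact hb s (hx.trans (le_of_lt hs))
  have ht := tendsto_limUnder_of_hasDerivAt_of_integrableOn_Ioi (fun x _ => hd x) (hi 0 le_rfl)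
  refine ⟨atTop.limUnder u, fun z hz => ?_⟩
  have h1 := integral_Ioi_of_hasDerivAt_of_tendsto (hd z).continuousAt.continuousWithinAt
    (fun x _ => hd x) (hi z hz) ht
  have h2 : ‖∫ s in Ioi z, u' s‖ ≤ ∫ s in Ioi z, C * Real.exp (-η * s) := by
    refine norm_integral_le_of_norm_le ((hexp z).const_mul _) ?_
    filter_upwards [ae_restrict_mem measurableSet_Ioi] with s hs
    exact hb s (hz.trans (le_of_lt hs))
  rw [h1, norm_sub_rev, integral_const_mul, integral_exp_mul_Ioi (by linarith)] at h2
  refine h2.trans (le_of_eq ?_)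
  rw [neg_div_neg_eq]; ring

theorem uniq_aux (α K : ℝ) (hα : 0 < α) (hK : 0 < K) (V w w' : ℝ → ℂ)
    (hVb : ∀ s, 0 ≤ s → ‖V s‖ ≤ K)
    (hd1 : ∀ z, HasDerivAt w (w' z) z)
    (hd2 : ∀ z, 0 ≤ z → HasDerivAt w' (2 * α * w' z + V z * w z) z)
    (h0 : w 0 = 0) (h0' : w' 0 = 0) (z : ℝ) (hz : 0 ≤ z) : w z = 0 := by
  have key := ODE_solution_unique_of_mem_Icc_right (E := ℂ × ℂ)
    (v := fun t p => (p.2, 2 * α * p.2 + V t * p.1)) (s := fun _ => univ)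
    (K := ⟨1 + 2 * α + K, by positivity⟩) (f := fun t => (w t, w' t)) (g := fun _ => 0)
    (a := 0) (b := z) ?_ ?_ ?_ (by simp) ?_ ?_ (by simp) ?_
  · have := key (right_mem_Icc.2 hz)
    simpa using congrArg Prod.fst this
  · intro t ht
    refine (LipschitzWith.of_dist_le_mul fun p r => ?_).lipschitzOnWith
    rw [dist_eq_norm, dist_eq_norm]
    have e : ((p.2, 2 * α * p.2 + V t * p.1) - (r.2, 2 * α * r.2 + V t * r.1) : ℂ × ℂ)
      = ((p - r).2, 2 * α * (p - r).2 + V t * (p - r).1) := by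
      ext
      · simp
      · simp; ring
    rw [e]
    generalize p - r = d
    have h1 := norm_fst_le d
    have h2 := norm_snd_le d
    have h3 := hVb t ht.1
    have h4 := norm_nonneg d
    change _ ≤ (1 + 2 * α + K) * ‖d‖
    rw [Prod.norm_def]
    refine max_le ?_ ?_
    · calc ‖d.2‖ ≤ 1 * ‖d‖ := by linarith
        _ ≤ _ := by gcongr; linarith
    · calc ‖2 * (α:ℂ) * d.2 + V t * d.1‖ ≤ ‖2 * (α:ℂ) * d.2‖ + ‖V t * d.1‖ := norm_add_le _ _
        _ = 2 * α * ‖d.2‖ + ‖V t‖ * ‖d.1‖ := by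
          rw [norm_mul, norm_mul, norm_mul, Complex.norm_real, Real.norm_of_nonneg hα.le]
          simp
        _ ≤ 2 * α * ‖d‖ + K * ‖d‖ := by gcongr
        _ ≤ _ := by nlinarith
  · intro t ht
    exact ((hd1 t).continuousAt.prodMk (hd2 t ht.1).continuousAt).continuousWithinAt
  · intro t ht
    exact ((hd1 t).prodMk (hd2 t ht.1)).hasDerivWithinAt
  · exact continuousOn_const
  · intro t ht
    refine (hasDerivWithinAt_const t (Ici t) (0 : ℂ × ℂ)).congr_deriv ?_
    ext <;> simp
  · simp [h0, h0']

theorem core_aux (α K η₀ η : ℝ) (hα : 0 < α) (hK : 0 < K) (hη₀ : 0 < η₀) (V : ℝ → ℂ)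
    (hV : Continuous V) (hVb : ∀ s, 0 ≤ s → ‖V s‖ ≤ K * Real.exp (-η₀ * s))
    (hη : 0 < η) (hη1 : η < α) (hη2 : η < η₀) :
    ∃ v v' w w' : ℝ → ℂ, ∃ C : ℝ, (∀ z, HasDerivAt v (v' z) z) ∧
      (∀ z, 0 ≤ z → HasDerivAt v' (-2 * α * v' z + V z * v z) z) ∧
      (∀ z, 0 ≤ z → ‖v z - 1‖ ≤ C * Real.exp (-η * z)) ∧
      (∀ z, HasDerivAt w (w' z) z) ∧
      (∀ z, 0 ≤ z → HasDerivAt w' (2 * α * w' z + V z * w z) z) ∧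
      (∀ z, 0 ≤ z → ‖w z - 1‖ ≤ C * Real.exp (-η * z)) := by
  have htz : ∀ (f : ℝ → ℂ) (l : ℂ) (C r : ℝ), 0 < r →
      (∀ z, 0 ≤ z → ‖f z - l‖ ≤ C * Real.exp (-r * z)) → Tendsto f atTop (nhds l) := by
    intro f l C r hr hf
    rw [tendsto_iff_norm_sub_tendsto_zero]
    have h1 : Tendsto (fun s : ℝ => -r * s) atTop atBot :=
      tendsto_id.const_mul_atTop_of_neg (by linarith)
    have h2 := (Real.tendsto_exp_atBot.comp h1).const_mul C
    rw [mul_zero] at h2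
    refine squeeze_zero' (Eventually.of_forall fun _ => norm_nonneg _) ?_ h2
    filter_upwards [eventually_ge_atTop 0] with z hz
    exact hf z hz
  obtain ⟨w, w', hw1, hw2, ⟨Cw, hCw⟩, ⟨Cw', hCw'⟩⟩ := sol_minus α K η₀ hα hK hη₀ V hV hVb
  have hwt := htz w 1 Cw η₀ hη₀ hCw
  have hwt' := htz w' 0 Cw' η₀ hη₀ (by simpa using hCw')
  have hne : w 0 ≠ 0 ∨ w' 0 ≠ 0 := by
    by_contra! h
    have hz : ∀ z, 0 ≤ z → w z = 0 := uniq_aux α K hα hK V w w' (fun s hs => (hVb s hs).trans (by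
      refine mul_le_of_le_one_right hK.le (Real.exp_le_one_iff.2 ?_)
      nlinarith)) hw1 hw2 h.1 h.2
    have : Tendsto w atTop (nhds 0) := by
      refine tendsto_const_nhds.congr' ?_
      filter_upwards [eventually_ge_atTop 0] with z hz'
      exact (hz z hz').symm
    exact one_ne_zero (tendsto_nhds_unique hwt this)
  obtain ⟨u, u', hu1, hu2, hu0, hu0', ⟨Cu, hCu⟩⟩ := sol_plus α K η₀ hα hK hη₀ V hV hVb
    (starRingEnd ℂ (2 * α * w 0 - w' 0)) (starRingEnd ℂ (w 0)) η hη1 hη2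
  obtain ⟨l, hl⟩ := lim_aux u u' η Cu hη hu1 hCu
  have hut := htz u l _ η hη hl
  have hut' := htz u' 0 Cu η hη (by simpa using hCu)
  -- Wronskian
  have hW : ∀ z, 0 ≤ z → w z * u' z - w' z * u z + 2 * α * (w z * u z)
      = w 0 * u' 0 - w' 0 * u 0 + 2 * α * (w 0 * u 0) := by
    intro z hz
    have hd : ∀ x, 0 ≤ x → HasDerivAt
        (fun z => w z * u' z - w' z * u z + 2 * α * (w z * u z)) 0 x := by
      intro x hx
      refine ((((hw1 x).mul (hu2 x hx)).sub ((hw2 x hx).mul (hu1 x))).add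
        (((hw1 x).mul (hu1 x)).const_mul (2 * α : ℂ))).congr_deriv ?_
      ring
    exact constant_of_has_deriv_right_zero
      (f := fun z => w z * u' z - w' z * u z + 2 * α * (w z * u z)) (a := 0) (b := z)
      (fun x hx => (hd x hx.1).continuousAt.continuousWithinAt)
      (fun x hx => (hd x hx.1).hasDerivWithinAt) z (right_mem_Icc.2 hz)
  have hWt := ((hwt.mul hut').sub (hwt'.mul hut)).add ((hwt.mul hut).const_mul (2 * α : ℂ))
  have hWl : w 0 * u' 0 - w' 0 * u 0 + 2 * α * (w 0 * u 0) = 2 * α * l := by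
    have h1 : Tendsto (fun z => w z * u' z - w' z * u z + 2 * α * (w z * u z)) atTop
        (nhds (w 0 * u' 0 - w' 0 * u 0 + 2 * α * (w 0 * u 0))) := by
      refine tendsto_const_nhds.congr' ?_
      filter_upwards [eventually_ge_atTop 0] with z hz
      exact (hW z hz).symm
    have := tendsto_nhds_unique h1 hWt
    rw [this]; ring
  have hl0 : l ≠ 0 := by
    rintro rfl
    have h1 : w 0 * starRingEnd ℂ (w 0) +
        (2 * α * w 0 - w' 0) * starRingEnd ℂ (2 * α * w 0 - w' 0) = 0 := by
      rw [hu0, hu0'] at hWl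
      linear_combination hWl
    rw [Complex.mul_conj, Complex.mul_conj] at h1
    have h2 : Complex.normSq (w 0) + Complex.normSq (2 * α * w 0 - w' 0) = 0 := by
      exact_mod_cast h1
    have h3 := Complex.normSq_nonneg (w 0)
    have h4 := Complex.normSq_nonneg (2 * α * w 0 - w' 0)
    have h5 : w 0 = 0 := Complex.normSq_eq_zero.1 (by linarith)
    have h6 : 2 * α * w 0 - w' 0 = 0 := Complex.normSq_eq_zero.1 (by linarith)
    rw [h5] at h6
    rcases hne with h | h
    · exact h h5
    · apply h
      linear_combination -h6
  refine ⟨fun z => u z / l, fun z => u' z / l, w, w', max (Cu / η / ‖l‖) Cw,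
    fun z => (hu1 z).div_const l, ?_, ?_, hw1, hw2, ?_⟩
  · intro z hz
    refine ((hu2 z hz).div_const l).congr_deriv ?_
    ring
  · intro z hz
    have e : u z / l - 1 = (u z - l) / l := by field_simp
    rw [e, norm_div]
    have hln : 0 < ‖l‖ := norm_pos_iff.2 hl0
    calc _ ≤ (Cu / η * Real.exp (-η * z)) / ‖l‖ := by gcongr; exact hl z hz
      _ = (Cu / η / ‖l‖) * Real.exp (-η * z) := by ring
      _ ≤ _ := by gcongr; exact le_max_left _ _
  · intro z hz
    have hCw0 : 0 ≤ Cw := by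
      have := (norm_nonneg _).trans (hCw 0 le_rfl)
      simpa using this
    calc _ ≤ Cw * Real.exp (-η₀ * z) := hCw z hz
      _ ≤ Cw * Real.exp (-η * z) := by
        gcongr
      _ ≤ _ := by gcongr; exact le_max_right _ _

theorem ray_aux (P : BLProfile) (α : ℝ) (c : ℂ) (σ : ℝ) (hσ : σ ^ 2 = α ^ 2)
    (V v v' : ℝ → ℂ) (hV : ∀ z, 0 ≤ z → ((P.U z : ℂ) - c) * V z = (P.ddU z : ℂ))
    (hd1 : ∀ z, HasDerivAt v (v' z) z)
    (hd2 : ∀ z, 0 ≤ z → HasDerivAt v' (-2 * σ * v' z + V z * v z) z) (z : ℝ) (hz : 0 ≤ z) :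
    P.Ray α c (fun y => Complex.exp (σ * y) * v y) z = 0 := by
  have he : ∀ z : ℝ, HasDerivAt (fun z : ℝ => Complex.exp (σ * z))
      (Complex.exp (σ * z) * σ) z := by
    intro z
    have h1 : HasDerivAt (fun z : ℝ => (σ : ℂ) * z) σ z := by
      simpa using (Complex.ofRealCLM.hasDerivAt (x := z)).const_mul (σ : ℂ)
    exact h1.cexp
  have h1 : deriv (fun y : ℝ => Complex.exp (σ * y) * v y)
      = fun y : ℝ => Complex.exp (σ * y) * σ * v y + Complex.exp (σ * y) * v' y :=
    funext fun y => ((he y).mul (hd1 y)).deriv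
  have h2 := ((((he z).mul_const (σ : ℂ)).mul (hd1 z)).add ((he z).mul (hd2 z hz))).deriv
  have hσ' : (σ : ℂ) ^ 2 = (α : ℂ) ^ 2 := by exact_mod_cast hσ
  unfold BLProfile.Ray lapA
  rw [h1]
  erw [h2]
  rw [← hV z hz, ← hσ']
  ring

/-- **Lemma 3.2: slow Rayleigh solutions.** For admissible `(α,c)` there exist two
linearly independent solutions `φ_{α,±}(z) = e^{±αz}(1 + ψ_{α,±}(z))` of the
homogeneous Rayleigh equation, with `ψ_{α,±} ∈ X^η` and `‖ψ_{α,±}‖_η ≤ C`, for some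
`0 < η < min{α, η₀}`. -/
theorem rayleigh_homogeneous_solutions (P : BLProfile) (ε₀ : ℝ) (hε₀ : 0 < ε₀)
    (α : ℝ) (hα : 0 < α) (c : ℂ) (hadm : P.Admissible ε₀ α c) :
    ∃ η : ℝ, 0 < η ∧ η < min α P.eta0 ∧
      ∃ C > (0:ℝ), ∃ ψp ψm : ℝ → ℂ,
        memX η ψp ∧ memX η ψm ∧ wnorm η ψp ≤ C ∧ wnorm η ψm ≤ C ∧
        (∀ z ≥ (0:ℝ),
          P.Ray α c (fun y => Complex.exp (↑(α * y)) * (1 + ψp y)) z = 0) ∧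
        (∀ z ≥ (0:ℝ),
          P.Ray α c (fun y => Complex.exp (-↑(α * y)) * (1 + ψm y)) z = 0) ∧
        (∀ a b : ℂ,
          (∀ z ≥ (0:ℝ),
            a * (Complex.exp (↑(α * z)) * (1 + ψp z))
              + b * (Complex.exp (-↑(α * z)) * (1 + ψm z)) = 0) →
          a = 0 ∧ b = 0) := by
  have hη₀ := P.eta0_pos
  have hmin : 0 < min α P.eta0 := lt_min hα hη₀
  obtain ⟨η, hηdef⟩ : ∃ η, η = min α P.eta0 / 2 := ⟨_, rfl⟩
  have hη : 0 < η := by rw [hηdef]; linarith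
  have hηm : η < min α P.eta0 := by rw [hηdef]; linarith
  obtain ⟨C2, hC2, hdec⟩ := P.decay 2
  have hdd : ∀ z, 0 ≤ z → |P.ddU z| ≤ C2 * Real.exp (-P.eta0 * z) := by
    intro z hz
    have h1 := hdec z hz
    have e : iteratedDeriv 2 (fun y => P.U y - P.Uplus) = P.ddU := by
      rw [iteratedDeriv_succ, iteratedDeriv_one]
      unfold BLProfile.ddU
      have : deriv (fun y => P.U y - P.Uplus) = deriv P.U := by
        funext y; exact deriv_sub_const _
      rw [this]
    rwa [e] at h1
  have hddc : Continuous P.ddU := by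
    have h1 : ContDiff ℝ 2 P.U := P.smooth.of_le (by
      have : ((2 : ℕ∞) : WithTop ℕ∞) ≤ ((⊤ : ℕ∞) : WithTop ℕ∞) := WithTop.coe_le_coe.2 le_top
      exact this)
    have := h1.continuous_iteratedDeriv 2 le_rfl
    rwa [iteratedDeriv_succ, iteratedDeriv_one] at this
  have hUc : Continuous P.U := P.smooth.continuous
  obtain ⟨d, hd⟩ : ∃ d, d = ε₀ / (1 + α) := ⟨_, rfl⟩
  have hd0 : 0 < d := by rw [hd]; positivity
  have hUd : ∀ z, 0 ≤ z → d ≤ ‖(P.U z : ℂ) - c‖ := by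
    intro z hz
    have h1 : Metric.infDist c ((fun z => (P.U z : ℂ)) '' Set.Ici 0) ≤ dist c (P.U z : ℂ) :=
      Metric.infDist_le_dist_of_mem ⟨z, hz, rfl⟩
    rw [dist_eq_norm, norm_sub_rev] at h1
    rw [hd]
    exact le_trans hadm h1
  have hUne : ∀ z, 0 ≤ z → (P.U z : ℂ) - c ≠ 0 := fun z hz =>
    norm_pos_iff.1 (hd0.trans_le (hUd z hz))
  obtain ⟨V, hVdef⟩ : ∃ V : ℝ → ℂ, ∀ z, V z = (P.ddU |z| : ℂ) / ((P.U |z| : ℂ) - c) :=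
    ⟨_, fun _ => rfl⟩
  have hVc : Continuous V := by
    rw [show V = _ from funext hVdef]
    refine Continuous.div (by fun_prop) (by fun_prop) fun z => hUne _ (abs_nonneg z)
  have hVb : ∀ s, 0 ≤ s → ‖V s‖ ≤ C2 / d * Real.exp (-P.eta0 * s) := by
    intro s hs
    rw [hVdef, abs_of_nonneg hs, norm_div, Complex.norm_real, Real.norm_eq_abs]
    calc _ ≤ C2 * Real.exp (-P.eta0 * s) / d := by
          gcongr
          · exact hdd s hs
          · exact hUd s hs
      _ = _ := by ring
  have hVe : ∀ z, 0 ≤ z → ((P.U z : ℂ) - c) * V z = (P.ddU z : ℂ) := by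
    intro z hz
    rw [hVdef, abs_of_nonneg hz, mul_div_cancel₀ _ (hUne z hz)]
  obtain ⟨v, v', w, w', C, hv1, hv2, hv3, hw1, hw2, hw3⟩ := core_aux α (C2 / d) P.eta0 η hα
    (by positivity) hη₀ V hVc hVb hη (lt_of_lt_of_le hηm (min_le_left _ _))
    (lt_of_lt_of_le hηm (min_le_right _ _))
  have hbd : ∀ f : ℝ → ℂ, (∀ z, 0 ≤ z → ‖f z - 1‖ ≤ C * Real.exp (-η * z)) →
      ∀ z ≥ (0:ℝ), ‖f z - 1‖ * Real.exp (η * z) ≤ C := by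
    intro f hf z hz
    calc _ ≤ C * Real.exp (-η * z) * Real.exp (η * z) := by gcongr; exact hf z hz
      _ = C * (Real.exp (-η * z) * Real.exp (η * z)) := by ring
      _ = C := by rw [← Real.exp_add]; simp
  have htend : ∀ f : ℝ → ℂ, (∀ z, 0 ≤ z → ‖f z - 1‖ ≤ C * Real.exp (-η * z)) →
      Tendsto f atTop (nhds 1) := by
    intro f hf
    rw [tendsto_iff_norm_sub_tendsto_zero]
    have h1 : Tendsto (fun s : ℝ => -η * s) atTop atBot :=
      tendsto_id.const_mul_atTop_of_neg (by linarith)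
    have h2 := (Real.tendsto_exp_atBot.comp h1).const_mul C
    rw [mul_zero] at h2
    refine squeeze_zero' (Eventually.of_forall fun _ => norm_nonneg _) ?_ h2
    filter_upwards [eventually_ge_atTop 0] with z hz
    exact hf z hz
  have hwn : ∀ f : ℝ → ℂ, (∀ z, 0 ≤ z → ‖f z - 1‖ ≤ C * Real.exp (-η * z)) →
      wnorm η (fun z => f z - 1) ≤ max C 1 := by
    intro f hf
    refine csSup_le ⟨_, ⟨0, Set.mem_Ici.2 le_rfl, rfl⟩⟩ ?_
    rintro _ ⟨z, hz, rfl⟩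
    exact (hbd f hf z hz).trans (le_max_left _ _)
  refine ⟨η, hη, hηm, max C 1, lt_of_lt_of_le one_pos (le_max_right _ _), fun z => v z - 1,
    fun z => w z - 1, ⟨C, hbd v hv3⟩, ⟨C, hbd w hw3⟩, hwn v hv3, hwn w hw3, ?_, ?_, ?_⟩
  · intro z hz
    have := ray_aux P α c α rfl V v v' hVe hv1 hv2 z hz
    convert this using 3 with y
    push_cast
    ring
  · intro z hz
    have := ray_aux P α c (-α) (by ring) V w w' hVe hw1
      (fun z hz => (hw2 z hz).congr_deriv (by push_cast; ring)) z hz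
    convert this using 3 with y
    · push_cast
      ring_nf
  · intro a b hab
    have hab' : ∀ z : ℝ, 0 ≤ z → a * v z + b * (Complex.exp (-2 * α * z) * w z) = 0 := by
      intro z hz
      have h1 := hab z hz
      have e1 : Complex.exp (-(α * z)) * Complex.exp (α * z) = 1 := by
        rw [← Complex.exp_add]; simp
      have e2 : Complex.exp (-2 * α * z) = Complex.exp (-(α * z)) * Complex.exp (-(α * z)) := by
        rw [← Complex.exp_add]; ring_nf
      rw [e2]
      push_cast at h1
      linear_combination Complex.exp (-(α * z)) * h1 - a * v z * e1
    have he : Tendsto (fun z : ℝ => Complex.exp (-2 * α * z)) atTop (nhds 0) := by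
      rw [tendsto_zero_iff_norm_tendsto_zero]
      have h1 : Tendsto (fun s : ℝ => (-2 * α) * s) atTop atBot :=
        tendsto_id.const_mul_atTop_of_neg (by linarith)
      refine (Real.tendsto_exp_atBot.comp h1).congr fun z => ?_
      rw [show ((-2:ℂ) * α * z) = ((-2 * α * z : ℝ) : ℂ) by push_cast; ring, ← Complex.ofReal_exp,
        Complex.norm_real, Real.norm_of_nonneg (Real.exp_pos _).le]
      rfl
    have hvt := htend v hv3
    have hwt := htend w hw3
    have ht := (hvt.const_mul a).add ((he.mul hwt).const_mul b)
    have ha : a = 0 := by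
      have h0 : Tendsto (fun z : ℝ => a * v z + b * (Complex.exp (-2 * α * z) * w z)) atTop
          (nhds 0) := by
        refine tendsto_const_nhds.congr' ?_
        filter_upwards [eventually_ge_atTop 0] with z hz
        exact (hab' z hz).symm
      have := tendsto_nhds_unique ht h0
      simpa using this
    refine ⟨ha, ?_⟩
    have hbw : ∀ z : ℝ, 0 ≤ z → b * w z = 0 := by
      intro z hz
      have h1 := hab' z hz
      rw [ha] at h1
      have h2 : Complex.exp (-2 * α * z) * (b * w z) = 0 := by linear_combination h1
      exact (mul_eq_zero.1 h2).resolve_left (Complex.exp_ne_zero _)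
    have h0 : Tendsto (fun z : ℝ => b * w z) atTop (nhds 0) := by
      refine tendsto_const_nhds.congr' ?_
      filter_upwards [eventually_ge_atTop 0] with z hz
      exact (hbw z hz).symm
    have := tendsto_nhds_unique (hwt.const_mul b) h0
    simpa using this

end
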